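/- Let a, b, c be nonnegative integers with a+1 ≥ b, a+1 ≥ c and b+1 ≥ c. Then in ℚ(q,t): F₃(a,b,c) = ∑_{(i,j) ∈ Q̃(a,b,c)} [i+ε_{ij}, A−2i−j]_{q,t}. In particular, F₃(a,b,c) is a polynomial in q and t with nonnegative integer coefficients. -/

import Mathlib

open Finset

noncomputable section

/-- The field `ℚ(q,t)` of rational functions in two variables over `ℚ`. -/
abbrev K : Type := FractionRing (MvPolynomial (Fin 2) ℚ)

/-- The variable `q` in `ℚ(q,t)`. -/
def q : K := algebraMap (MvPolynomial (Fin 2) ℚ) K (MvPolynomial.X 0)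

/-- The variable `t` in `ℚ(q,t)`. -/
def t : K := algebraMap (MvPolynomial (Fin 2) ℚ) K (MvPolynomial.X 1)

/-- `H₂(a,b)` as a function of the two variables `x`, `y` (so that interchanging the
arguments interchanges `q` and `t`):
`H₂(a,b;x,y) = x^{a+2b}/(1 − y/x²) + x^a y^b/(1 − x²/y)`. -/
def H₂ (a b : ℤ) (x y : K) : K :=
  x ^ (a + 2 * b) / (1 - y / x ^ 2) + x ^ a * y ^ b / (1 - x ^ 2 / y)

/-- `H₃(a,b,c;x,y)`, the head-like standard-tableau expansion for `n = 4`. -/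
def H₃ (a b c : ℤ) (x y : K) : K :=
  x ^ (a + 2 * b + 3 * c) / ((1 - y / x ^ 2) * (1 - y / x ^ 3))
    + x ^ (a + 2 * b) * y ^ c / ((1 - y / x ^ 2) * (1 - x ^ 3 / y))
    + x ^ (a + 2 * c) * y ^ b * (1 - y) / ((1 - y ^ 2 / x ^ 2) * (1 - x ^ 2 / y) * (1 - y / x))
    + x ^ a * y ^ (b + 2 * c) / ((1 - x ^ 2 / y ^ 2) * (1 - x / y))
    + x ^ (a + c) * y ^ (b + c) * (1 - x) / ((1 - x ^ 2 / y) * (1 - x / y) * (1 - y / x))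

/-- `F₁(m) = (q^{m+1} − t^{m+1})/(q − t)`, the function `F(a)` of the paper. -/
def F₁ (m : ℤ) : K := (q ^ (m + 1) - t ^ (m + 1)) / (q - t)

/-- `F₂(a,b) = H₂(a,b;q,t)/(1 − t/q) + H₂(a,b;t,q)/(1 − q/t)`. -/
def F₂ (a b : ℤ) : K := H₂ a b q t / (1 - t / q) + H₂ a b t q / (1 - q / t)

/-- `F₃(a,b,c) = H₃(a,b,c;q,t)/(1 − t/q) + H₃(a,b,c;t,q)/(1 − q/t)`. -/
def F₃ (a b c : ℤ) : K := H₃ a b c q t / (1 - t / q) + H₃ a b c t q / (1 - q / t)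

/-- The symmetric chain `[k,ℓ]_{q,t} = ∑_{m=k}^{ℓ} q^m t^{k+ℓ−m}`. -/
def symChain (k l : ℤ) : K := ∑ m ∈ Finset.Icc k l, q ^ m * t ^ (k + l - m)

/-- The quasihead index set
`Q̃(a,b,c) = {(i,j) : 0 ≤ j ≤ c, j ≤ i ≤ b+c, 2i+2j ≤ a+b+2c−m_{cj}}`,
where `m_{cj} = (c − j) mod 2`. -/
def Qtilde (a b c : ℤ) : Finset (ℤ × ℤ) :=
  (Finset.Icc 0 (b + c) ×ˢ Finset.Icc 0 c).filter
    (fun p => p.2 ≤ p.1 ∧ 2 * p.1 + 2 * p.2 ≤ a + b + 2 * c - (c - p.2) % 2)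

/-! ### Closed form of `H₃` as an unrestricted double geometric sum -/

lemma H₃_rec_b (a b c : ℤ) (x y : K) (hx : x ≠ 0) (hy : y ≠ 0) (h1 : x - y ≠ 0)
    (h1' : x + y ≠ 0) (h2 : x ^ 2 - y ≠ 0) (h3 : x ^ 3 - y ≠ 0) :
    H₃ a b c x y = y * H₃ a (b - 1) c x y
      + (x ^ (a + 2 * b + 3 * c) - x ^ (a + 2 * b - 3) * y ^ (c + 1)) / (1 - y / x ^ 3) := by
  have e1 : 1 - y / x ^ 2 = (x ^ 2 - y) / x ^ 2 := by field_simp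
  have e2 : 1 - y / x ^ 3 = (x ^ 3 - y) / x ^ 3 := by field_simp
  have e3 : 1 - x ^ 3 / y = -(x ^ 3 - y) / y := by field_simp; ring
  have e4 : 1 - y ^ 2 / x ^ 2 = (x - y) * (x + y) / x ^ 2 := by field_simp; ring
  have e5 : 1 - x ^ 2 / y = -(x ^ 2 - y) / y := by field_simp; ring
  have e6 : 1 - y / x = (x - y) / x := by field_simp
  have e7 : 1 - x ^ 2 / y ^ 2 = -((x - y) * (x + y)) / y ^ 2 := by field_simp; ring
  have e8 : 1 - x / y = -(x - y) / y := by field_simp; ring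
  unfold H₃
  rw [e1, e2, e3, e4, e5, e6, e7, e8]
  have k1 : x ^ (a + 2 * (b - 1) + 3 * c) = x ^ (a + 2 * b + 3 * c) / x ^ 2 := by
    rw [eq_div_iff (pow_ne_zero _ hx), ← zpow_natCast, ← zpow_add₀ hx]; congr 1; push_cast; ring
  have k2 : x ^ (a + 2 * (b - 1)) = x ^ (a + 2 * b) / x ^ 2 := by
    rw [eq_div_iff (pow_ne_zero _ hx), ← zpow_natCast, ← zpow_add₀ hx]; congr 1; push_cast; ring
  have k3 : x ^ (a + 2 * b - 3) = x ^ (a + 2 * b) / x ^ 3 := by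
    rw [eq_div_iff (pow_ne_zero _ hx), ← zpow_natCast, ← zpow_add₀ hx]; congr 1; push_cast; ring
  have k4 : y ^ (b - 1) = y ^ b / y := by
    rw [eq_div_iff hy, ← zpow_add_one₀ hy]; congr 1; ring
  have k5 : y ^ (b - 1 + 2 * c) = y ^ (b + 2 * c) / y := by
    rw [eq_div_iff hy, ← zpow_add_one₀ hy]; congr 1; ring
  have k6 : y ^ (b - 1 + c) = y ^ (b + c) / y := by
    rw [eq_div_iff hy, ← zpow_add_one₀ hy]; congr 1; ring
  have k7 : y ^ (c + 1) = y ^ c * y := zpow_add_one₀ hy c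
  rw [k1, k2, k3, k4, k5, k6, k7]
  generalize x ^ (a + 2 * b + 3 * c) = X1
  generalize x ^ (a + 2 * b) = X2
  generalize x ^ (a + 2 * c) = X3
  generalize x ^ (a + c) = X4
  generalize x ^ a = X5
  generalize y ^ (b + 2 * c) = Y1
  generalize y ^ (b + c) = Y2
  generalize y ^ b = Y3
  generalize y ^ c = Y4
  field_simp
  ring

lemma H₃_rec_c (a c : ℤ) (x y : K) (hx : x ≠ 0) (hy : y ≠ 0) (h1 : x - y ≠ 0)
    (h1' : x + y ≠ 0) (h2 : x ^ 2 - y ≠ 0) (h3 : x ^ 3 - y ≠ 0) :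
    H₃ a c (c + 1) x y = x ^ 2 * y * H₃ a (c - 1) c x y
      + (x ^ (a + 5 * c + 3) - x ^ (a + c - 1) * y ^ (2 * c + 2)) / (1 - y / x ^ 2)
      + (x ^ (a + c) * y ^ (2 * c + 2) - x ^ (a - 1) * y ^ (3 * c + 3)) / (1 - y / x) := by
  have e1 : 1 - y / x ^ 2 = (x ^ 2 - y) / x ^ 2 := by field_simp
  have e2 : 1 - y / x ^ 3 = (x ^ 3 - y) / x ^ 3 := by field_simp
  have e3 : 1 - x ^ 3 / y = -(x ^ 3 - y) / y := by field_simp; ring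
  have e4 : 1 - y ^ 2 / x ^ 2 = (x - y) * (x + y) / x ^ 2 := by field_simp; ring
  have e5 : 1 - x ^ 2 / y = -(x ^ 2 - y) / y := by field_simp; ring
  have e6 : 1 - y / x = (x - y) / x := by field_simp
  have e7 : 1 - x ^ 2 / y ^ 2 = -((x - y) * (x + y)) / y ^ 2 := by field_simp; ring
  have e8 : 1 - x / y = -(x - y) / y := by field_simp; ring
  unfold H₃
  rw [e1, e2, e3, e4, e5, e6, e7, e8]
  have p2 : ∀ (z : K), z ≠ 0 → z ^ (2 * c) = (z ^ c) ^ 2 := fun z hz => by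
    rw [pow_two, ← zpow_add₀ hz, two_mul]
  have p3 : ∀ (z : K), z ≠ 0 → z ^ (3 * c) = (z ^ c) ^ 3 := fun z hz => by
    rw [pow_succ, pow_two, ← zpow_add₀ hz, ← zpow_add₀ hz]; congr 1; ring
  have p5 : ∀ (z : K), z ≠ 0 → z ^ (5 * c) = (z ^ c) ^ 5 := fun z hz => by
    rw [← zpow_natCast, ← zpow_mul]; congr 1; push_cast; ring
  have n1 : ∀ (z : K), z ^ (3 : ℤ) = z ^ 3 := fun z => zpow_natCast z 3
  have n2 : ∀ (z : K), z ^ (2 : ℤ) = z ^ 2 := fun z => zpow_natCast z 2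
  simp only [mul_add, mul_sub, mul_one, zpow_add₀ hx, zpow_add₀ hy, zpow_sub₀ hx, zpow_sub₀ hy,
    p2 x hx, p2 y hy, p3 x hx, p3 y hy, p5 x hx, n1, n2, zpow_one]
  have hX : x ^ a ≠ 0 := zpow_ne_zero _ hx
  generalize x ^ a = X at *
  generalize x ^ c = C at *
  generalize y ^ c = D at *
  field_simp
  ring

lemma H₃_zero (a : ℤ) (x y : K) (hx : x ≠ 0) (hy : y ≠ 0) (h1 : x - y ≠ 0)
    (h1' : x + y ≠ 0) (h2 : x ^ 2 - y ≠ 0) (h3 : x ^ 3 - y ≠ 0) :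
    H₃ a (-1) 0 x y = 0 := by
  have e1 : 1 - y / x ^ 2 = (x ^ 2 - y) / x ^ 2 := by field_simp
  have e2 : 1 - y / x ^ 3 = (x ^ 3 - y) / x ^ 3 := by field_simp
  have e3 : 1 - x ^ 3 / y = -(x ^ 3 - y) / y := by field_simp; ring
  have e4 : 1 - y ^ 2 / x ^ 2 = (x - y) * (x + y) / x ^ 2 := by field_simp; ring
  have e5 : 1 - x ^ 2 / y = -(x ^ 2 - y) / y := by field_simp; ring
  have e6 : 1 - y / x = (x - y) / x := by field_simp
  have e7 : 1 - x ^ 2 / y ^ 2 = -((x - y) * (x + y)) / y ^ 2 := by field_simp; ring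
  have e8 : 1 - x / y = -(x - y) / y := by field_simp; ring
  unfold H₃
  rw [e1, e2, e3, e4, e5, e6, e7, e8]
  have k1 : x ^ (a + 2 * (-1)) = x ^ a / x ^ 2 := by
    rw [eq_div_iff (pow_ne_zero _ hx), ← zpow_natCast, ← zpow_add₀ hx]; congr 1; push_cast; ring
  simp only [mul_zero, add_zero, k1, zpow_neg_one, zpow_zero]
  generalize x ^ a = X
  field_simp
  ring

/-- The unrestricted index set. -/
def Rfull (b c : ℤ) : Finset (ℤ × ℤ) :=
  (Finset.Icc 0 (b + c) ×ˢ Finset.Icc 0 c).filter (fun p => p.2 ≤ p.1)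

lemma mem_Rfull (b c : ℤ) (p : ℤ × ℤ) :
    p ∈ Rfull b c ↔ 0 ≤ p.2 ∧ p.2 ≤ c ∧ p.2 ≤ p.1 ∧ p.1 ≤ b + c := by
  simp only [Rfull, Finset.mem_filter, Finset.mem_product, Finset.mem_Icc]
  omega

/-- Exponent monomial of the unrestricted sum. -/
def mon (a b c : ℤ) (x y : K) (p : ℤ × ℤ) : K :=
  x ^ (a + 2 * b + 3 * c - 2 * p.1 - p.2) * y ^ (p.1 + max 0 (p.1 + p.2 - b - c))

lemma telescope (g : ℤ → K) (k n : ℤ) (hn : k - 1 ≤ n) :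
    ∑ j ∈ Finset.Icc k n, (g j - g (j + 1)) = g k - g (n + 1) := by
  induction n, hn using Int.leInduction with
  | base => simp
  | succ m hm ih =>
    have : Finset.Icc k (m + 1) = insert (m + 1) (Finset.Icc k m) := by
      ext z; simp only [Finset.mem_Icc, Finset.mem_insert]; omega
    rw [this, Finset.sum_insert (by simp), ih]
    ring

/-- Geometric sum with ratio `y / x ^ d`. -/
lemma geom (x y : K) (hx : x ≠ 0) (hy : y ≠ 0) (d : ℕ) (h : 1 - y / x ^ d ≠ 0) (u v k n : ℤ)
    (hn : k - 1 ≤ n) :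
    ∑ j ∈ Finset.Icc k n, x ^ (u - d * j) * y ^ (v + j)
      = (x ^ (u - d * k) * y ^ (v + k) - x ^ (u - d * (n + 1)) * y ^ (v + (n + 1)))
        / (1 - y / x ^ d) := by
  rw [sub_div, ← telescope (fun j => x ^ (u - d * j) * y ^ (v + j) / (1 - y / x ^ d)) k n hn]
  refine Finset.sum_congr rfl fun j _ => ?_
  rw [← sub_div, eq_div_iff h]
  have e1 : x ^ (u - d * (j + 1)) = x ^ (u - d * j) / x ^ d := by
    rw [eq_div_iff (pow_ne_zero _ hx), ← zpow_natCast, ← zpow_add₀ hx]; congr 1; ring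
  have e2 : y ^ (v + (j + 1)) = y ^ (v + j) * y := by
    rw [← zpow_add_one₀ hy]; congr 1; ring
  rw [e1, e2]
  ring

lemma sum_rec_b (a b c : ℤ) (x y : K) (hy : y ≠ 0) (hc : 0 ≤ c) (hb : c ≤ b) :
    ∑ p ∈ Rfull b c, mon a b c x y p = y * ∑ p ∈ Rfull (b - 1) c, mon a (b - 1) c x y p
      + ∑ j ∈ Finset.Icc 0 c, x ^ (a + 2 * b + 3 * c - (3 : ℕ) * j) * y ^ (0 + j) := by
  rw [← Finset.sum_filter_add_sum_filter_not (Rfull b c) (fun p => p.2 < p.1), Finset.mul_sum]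
  congr 1
  · refine Finset.sum_nbij' (fun p => (p.1 - 1, p.2)) (fun p => (p.1 + 1, p.2)) ?_ ?_ ?_ ?_ ?_
    · intro p; simp only [Finset.mem_filter, mem_Rfull]; omega
    · intro p; simp only [Finset.mem_filter, mem_Rfull]; omega
    · intro p _; simp
    · intro p _; simp
    · intro p _
      simp only [mon]
      rw [mul_left_comm, ← zpow_one_add₀ hy]
      congr 2 <;> omega
  · refine Finset.sum_nbij' (fun p => p.2) (fun j => (j, j)) ?_ ?_ ?_ ?_ ?_
    · intro p; simp only [Finset.mem_filter, mem_Rfull, Finset.mem_Icc]; omega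
    · intro p; simp only [Finset.mem_filter, mem_Rfull, Finset.mem_Icc]; omega
    · intro p; simp only [Finset.mem_filter, mem_Rfull]; intro h; ext <;> simp; omega
    · intro p _; simp
    · intro p
      simp only [Finset.mem_filter, mem_Rfull, mon]
      intro h
      congr 2 <;> omega

lemma sum_rec_c (a c : ℤ) (x y : K) (hx : x ≠ 0) (hy : y ≠ 0) (hc : 0 ≤ c) :
    ∑ p ∈ Rfull c (c + 1), mon a c (c + 1) x y p
      = x ^ 2 * y * ∑ p ∈ Rfull (c - 1) c, mon a (c - 1) c x y p
      + ∑ i ∈ Finset.Icc 0 (2 * c + 1), x ^ (a + 5 * c + 3 - (2 : ℕ) * i) * y ^ (0 + i)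
      + ∑ j ∈ Finset.Icc 1 (c + 1), x ^ (a + c + 1 - (1 : ℕ) * j) * y ^ (2 * c + 1 + j) := by
  rw [← Finset.sum_filter_add_sum_filter_not (Rfull c (c + 1))
      (fun p => 1 ≤ p.2 ∧ p.1 ≤ 2 * c), Finset.mul_sum, add_assoc]
  congr 1
  · refine Finset.sum_nbij' (fun p => (p.1 - 1, p.2 - 1)) (fun p => (p.1 + 1, p.2 + 1)) ?_ ?_ ?_ ?_ ?_
    · intro p; simp only [Finset.mem_filter, mem_Rfull]; omega
    · intro p; simp only [Finset.mem_filter, mem_Rfull]; omega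
    · intro p _; simp
    · intro p _; simp
    · intro p _
      simp only [mon]
      rw [mul_mul_mul_comm, ← zpow_one_add₀ hy, ← zpow_natCast, ← zpow_add₀ hx]
      congr 2 <;> omega
  rw [← Finset.sum_filter_add_sum_filter_not
      ((Rfull c (c + 1)).filter (fun p => ¬ (1 ≤ p.2 ∧ p.1 ≤ 2 * c))) (fun p => p.2 = 0)]
  congr 1
  · refine Finset.sum_nbij' (fun p => p.1) (fun i => (i, 0)) ?_ ?_ ?_ ?_ ?_
    · intro p; simp only [Finset.mem_filter, mem_Rfull, Finset.mem_Icc]; omega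
    · intro p; simp only [Finset.mem_filter, mem_Rfull, Finset.mem_Icc, and_true]; omega
    · intro p; simp only [Finset.mem_filter, mem_Rfull]; intro h; ext <;> simp; omega
    · intro p _; simp
    · intro p
      simp only [Finset.mem_filter, mem_Rfull, mon]
      intro h
      congr 2 <;> omega
  · refine Finset.sum_nbij' (fun p => p.2) (fun j => (2 * c + 1, j)) ?_ ?_ ?_ ?_ ?_
    · intro p; simp only [Finset.mem_filter, mem_Rfull, Finset.mem_Icc]; omega
    · intro p; simp only [Finset.mem_filter, mem_Rfull, Finset.mem_Icc]; omega
    · intro p; simp only [Finset.mem_filter, mem_Rfull]; intro h; ext <;> simp; omega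
    · intro p _; simp
    · intro p
      simp only [Finset.mem_filter, mem_Rfull, mon]
      intro h
      congr 2 <;> omega

lemma one_sub_ne (x y : K) (d : ℕ) (hx : x ≠ 0) (h : x ^ d - y ≠ 0) : 1 - y / x ^ d ≠ 0 := by
  rw [one_sub_div (pow_ne_zero _ hx)]
  exact div_ne_zero h (pow_ne_zero _ hx)

lemma H₃_eq_sum_base (a c : ℤ) (x y : K) (hx : x ≠ 0) (hy : y ≠ 0) (h1 : x - y ≠ 0)
    (h1' : x + y ≠ 0) (h2 : x ^ 2 - y ≠ 0) (h3 : x ^ 3 - y ≠ 0) (hc : 0 ≤ c) :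
    H₃ a (c - 1) c x y = ∑ p ∈ Rfull (c - 1) c, mon a (c - 1) c x y p := by
  induction c, hc using Int.leInduction with
  | base =>
    have : Rfull (0 - 1) 0 = ∅ := by
      ext p; simp only [mem_Rfull, Finset.notMem_empty, iff_false]; omega
    rw [this, Finset.sum_empty]
    exact H₃_zero a x y hx hy h1 h1' h2 h3
  | succ c hc ih =>
    rw [add_sub_cancel_right, H₃_rec_c a c x y hx hy h1 h1' h2 h3, sum_rec_c a c x y hx hy hc, ih,
      geom x y hx hy 2 (one_sub_ne x y 2 hx h2) _ _ _ _ (by omega),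
      geom x y hx hy 1 (one_sub_ne x y 1 hx (by simpa using h1)) _ _ _ _ (by omega)]
    congr 2
    · congr 2
      · simp
      · congr 2 <;> push_cast <;> ring
    · congr 1
      · congr 2 <;> push_cast <;> ring
      · congr 2 <;> push_cast <;> ring
    · simp

lemma H₃_eq_sum (a b c : ℤ) (x y : K) (hx : x ≠ 0) (hy : y ≠ 0) (h1 : x - y ≠ 0)
    (h1' : x + y ≠ 0) (h2 : x ^ 2 - y ≠ 0) (h3 : x ^ 3 - y ≠ 0) (hc : 0 ≤ c) (hb : c - 1 ≤ b) :
    H₃ a b c x y = ∑ p ∈ Rfull b c, mon a b c x y p := by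
  induction b, hb using Int.leInduction with
  | base => exact H₃_eq_sum_base a c x y hx hy h1 h1' h2 h3 hc
  | succ b hb ih =>
    rw [H₃_rec_b a (b + 1) c x y hx hy h1 h1' h2 h3, sum_rec_b a (b + 1) c x y hy hc (by omega),
      geom x y hx hy 3 (one_sub_ne x y 3 hx h3) _ _ _ _ (by omega), add_sub_cancel_right, ih]
    congr 2
    congr 1
    · simp
    · congr 2 <;> push_cast <;> ring

/-! ### The variables -/

lemma alg_ne {f g : MvPolynomial (Fin 2) ℚ} (v : Fin 2 → ℚ)
    (h : MvPolynomial.eval v f ≠ MvPolynomial.eval v g) :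
    algebraMap (MvPolynomial (Fin 2) ℚ) K f - algebraMap (MvPolynomial (Fin 2) ℚ) K g ≠ 0 := by
  rw [sub_ne_zero]
  intro e
  exact h (congrArg _ (IsFractionRing.injective (MvPolynomial (Fin 2) ℚ) K e))

lemma q_ne : q ≠ 0 := by
  have := alg_ne (f := MvPolynomial.X 0) (g := 0) ![1, 1] (by simp)
  simpa [q] using this

lemma t_ne : t ≠ 0 := by
  have := alg_ne (f := MvPolynomial.X 1) (g := 0) ![1, 1] (by simp)
  simpa [t] using this

lemma qt1 : q - t ≠ 0 := by
  simpa [q, t] using alg_ne (f := MvPolynomial.X 0) (g := MvPolynomial.X 1) ![2, 3] (by norm_num)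

lemma qt1' : q + t ≠ 0 := by
  simpa [q, t] using alg_ne (f := MvPolynomial.X 0) (g := -MvPolynomial.X 1) ![2, 3] (by norm_num)

lemma qtd (d : ℕ) : q ^ d - t ≠ 0 := by
  simpa [q, t] using
    alg_ne (f := MvPolynomial.X 0 ^ d) (g := MvPolynomial.X 1) ![1, 2] (by norm_num)

lemma tqd (d : ℕ) : t ^ d - q ≠ 0 := by
  simpa [q, t] using
    alg_ne (f := MvPolynomial.X 1 ^ d) (g := MvPolynomial.X 0) ![2, 1] (by norm_num)

/-! ### Signed chains -/

/-- The signed chain. -/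
def sgn (k l : ℤ) : K := (q ^ (l + 1) * t ^ k - q ^ k * t ^ (l + 1)) / (q - t)

lemma symChain_eq (k l : ℤ) (h : k - 1 ≤ l) : symChain k l = sgn k l := by
  have e : symChain k l = ∑ m ∈ Finset.Icc k l,
      (-(q ^ m * t ^ (k + l + 1 - m) / (q - t))
        - -(q ^ (m + 1) * t ^ (k + l + 1 - (m + 1)) / (q - t))) := by
    refine Finset.sum_congr rfl fun m _ => ?_
    have e1 : t ^ (k + l + 1 - m) = t ^ (k + l - m) * t := by
      rw [← zpow_add_one₀ t_ne]; congr 1; ring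
    have e2 : k + l + 1 - (m + 1) = k + l - m := by ring
    have := qt1
    rw [e1, e2, zpow_add_one₀ q_ne]
    field_simp
    ring
  rw [e, telescope (fun m => -(q ^ m * t ^ (k + l + 1 - m) / (q - t))) k l h, sgn]
  have e3 : k + l + 1 - k = l + 1 := by ring
  have e4 : k + l + 1 - (l + 1) = k := by ring
  rw [e3, e4]
  ring

lemma F₃_eq_full (a b c : ℤ) (hc : 0 ≤ c) (hb : c - 1 ≤ b) :
    F₃ a b c = ∑ p ∈ Rfull b c, sgn (p.1 + max 0 (p.1 + p.2 - b - c))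
            (a + 2 * b + 3 * c - 2 * p.1 - p.2) := by
  have hq := q_ne
  have ht := t_ne
  have h1 := qt1
  have h2 : t - q ≠ 0 := by simpa using tqd 1
  rw [F₃, H₃_eq_sum a b c q t hq ht h1 qt1' (qtd 2) (qtd 3) hc hb,
    H₃_eq_sum a b c t q ht hq h2 (by rw [add_comm]; exact qt1') (tqd 2) (tqd 3) hc hb,
    Finset.sum_div, Finset.sum_div, ← Finset.sum_add_distrib]
  refine Finset.sum_congr rfl fun p _ => ?_
  rw [mon, mon, sgn, zpow_add_one₀ hq, zpow_add_one₀ ht]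
  have e1 : 1 - t / q = (q - t) / q := by field_simp
  have e2 : 1 - q / t = -(q - t) / t := by field_simp; ring
  rw [e1, e2]
  generalize q ^ (a + 2 * b + 3 * c - 2 * p.1 - p.2) = X1
  generalize t ^ (a + 2 * b + 3 * c - 2 * p.1 - p.2) = X2
  generalize q ^ (p.1 + max 0 (p.1 + p.2 - b - c)) = X3
  generalize t ^ (p.1 + max 0 (p.1 + p.2 - b - c)) = X4
  field_simp
  ring

lemma sgn_anti (k l k' l' : ℤ) (h : k' = l + 1) (h' : l' + 1 = k) : sgn k l + sgn k' l' = 0 := by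
  rw [sgn, sgn, h, h']
  ring

/-- Sign-reversing involution on the indices cut off by `Qtilde`. -/
def invol (a b c : ℤ) (p : ℤ × ℤ) : ℤ × ℤ :=
  let j' := if (a + b) % 2 = 1 then p.2 else if (c - p.2) % 2 = 1 then p.2 + 1 else p.2 - 1
  ((a + 3 * b + 4 * c + 1 - 2 * p.1 - p.2 - j') / 2, j')

lemma invol_spec (a b c : ℤ) (ha : 0 ≤ a) (hb : 0 ≤ b) (hc : 0 ≤ c)
    (hab : b ≤ a + 1) (hac : c ≤ a + 1) (hbc : c ≤ b + 1) (p : ℤ × ℤ)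
    (h0 : 0 ≤ p.2) (h1 : p.2 ≤ c) (h2 : p.2 ≤ p.1) (h3 : p.1 ≤ b + c)
    (h4 : ¬ 2 * p.1 + 2 * p.2 ≤ a + b + 2 * c - (c - p.2) % 2) :
    (0 ≤ (invol a b c p).2 ∧ (invol a b c p).2 ≤ c ∧ (invol a b c p).2 ≤ (invol a b c p).1 ∧
      (invol a b c p).1 ≤ b + c) ∧
    (¬ 2 * (invol a b c p).1 + 2 * (invol a b c p).2
        ≤ a + b + 2 * c - (c - (invol a b c p).2) % 2) ∧
    2 * (invol a b c p).1 + (invol a b c p).2 = a + 3 * b + 4 * c + 1 - 2 * p.1 - p.2 ∧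
    invol a b c (invol a b c p) = p := by
  obtain ⟨i, j⟩ := p
  simp only at h0 h1 h2 h3 h4
  by_cases e1 : (a + b) % 2 = 1
  · obtain ⟨s, hs⟩ : ∃ s, a = 2 * s + 1 - b := ⟨(a + b) / 2, by omega⟩
    have hd : (a + 3 * b + 4 * c + 1 - 2 * i - j - j) / 2 = s + b + 2 * c + 1 - i - j := by omega
    have hd' : (a + 3 * b + 4 * c + 1 - 2 * (s + b + 2 * c + 1 - i - j) - j - j) / 2 = i := by
      omega
    simp only [invol, e1, if_true, Prod.mk.injEq, hd, hd', and_true]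
    subst hs
    rcases Int.emod_two_eq_zero_or_one (c - j) with hm | hm <;> rw [hm] at h4 ⊢ <;>
    refine ⟨⟨?_, ?_, ?_, ?_⟩, ?_, ?_⟩ <;> omega
  · by_cases e2 : (c - j) % 2 = 1
    · have e3 : ¬ (c - (j + 1)) % 2 = 1 := by omega
      simp only [invol, e1, e2, e3, if_true, if_false, Prod.mk.injEq]
      refine ⟨⟨?_, ?_, ?_, ?_⟩, ?_, ?_, ?_, ?_⟩ <;> omega
    · have e3 : (c - (j - 1)) % 2 = 1 := by omega
      simp only [invol, e1, e2, e3, if_true, if_false, Prod.mk.injEq]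
      refine ⟨⟨?_, ?_, ?_, ?_⟩, ?_, ?_, ?_, ?_⟩ <;> omega

lemma full_eq_Qtilde (a b c : ℤ) (ha : 0 ≤ a) (hb : 0 ≤ b) (hc : 0 ≤ c)
    (hab : b ≤ a + 1) (hac : c ≤ a + 1) (hbc : c ≤ b + 1) :
    ∑ p ∈ Rfull b c, sgn (p.1 + max 0 (p.1 + p.2 - b - c))
            (a + 2 * b + 3 * c - 2 * p.1 - p.2)
      = ∑ p ∈ Qtilde a b c, symChain (p.1 + max 0 (p.1 + p.2 - b - c))
            (a + 2 * b + 3 * c - 2 * p.1 - p.2) := by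
  rw [← Finset.sum_filter_add_sum_filter_not (Rfull b c)
    (fun p => 2 * p.1 + 2 * p.2 ≤ a + b + 2 * c - (c - p.2) % 2)]
  have hz : ∑ p ∈ (Rfull b c).filter
      (fun p => ¬ 2 * p.1 + 2 * p.2 ≤ a + b + 2 * c - (c - p.2) % 2),
      sgn (p.1 + max 0 (p.1 + p.2 - b - c)) (a + 2 * b + 3 * c - 2 * p.1 - p.2) = 0 := by
    have key : ∀ p ∈ (Rfull b c).filter
        (fun p => ¬ 2 * p.1 + 2 * p.2 ≤ a + b + 2 * c - (c - p.2) % 2),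
        sgn (p.1 + max 0 (p.1 + p.2 - b - c)) (a + 2 * b + 3 * c - 2 * p.1 - p.2)
        + sgn ((invol a b c p).1 + max 0 ((invol a b c p).1 + (invol a b c p).2 - b - c))
          (a + 2 * b + 3 * c - 2 * (invol a b c p).1 - (invol a b c p).2) = 0 := by
      intro p hp
      rw [Finset.mem_filter, mem_Rfull] at hp
      obtain ⟨⟨h0, h1, h2, h3⟩, h4⟩ := hp
      obtain ⟨⟨g0, g1, g2, g3⟩, g4, g5, -⟩ :=
        invol_spec a b c ha hb hc hab hac hbc p h0 h1 h2 h3 h4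
      apply sgn_anti <;> omega
    refine Finset.sum_involution (fun p _ => invol a b c p) key ?_ ?_ ?_
    · intro p hp hne heq
      have := key p hp
      rw [heq] at this
      exact hne (by simpa using this)
    · intro p hp
      rw [Finset.mem_filter, mem_Rfull] at hp ⊢
      obtain ⟨⟨h0, h1, h2, h3⟩, h4⟩ := hp
      obtain ⟨g, g4, -⟩ := invol_spec a b c ha hb hc hab hac hbc p h0 h1 h2 h3 h4
      exact ⟨g, g4⟩
    · intro p hp
      rw [Finset.mem_filter, mem_Rfull] at hp
      obtain ⟨⟨h0, h1, h2, h3⟩, h4⟩ := hp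
      exact (invol_spec a b c ha hb hc hab hac hbc p h0 h1 h2 h3 h4).2.2.2
  rw [hz, add_zero, Rfull, Finset.filter_filter]
  refine Finset.sum_congr rfl fun p hp => ?_
  simp only [Qtilde, Finset.mem_filter, Finset.mem_product, Finset.mem_Icc] at hp
  rw [symChain_eq]
  omega

/-- Polynomials with natural coefficients inside `K`. -/
def natPoly : MvPolynomial (Fin 2) ℕ →+* K :=
  (algebraMap (MvPolynomial (Fin 2) ℚ) K).comp (MvPolynomial.map (Nat.castRingHom ℚ))

lemma symChain_mem (k l : ℤ) (hk : 0 ≤ k) : symChain k l ∈ natPoly.rangeS := by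
  have hq : q ∈ natPoly.rangeS := ⟨MvPolynomial.X 0, by simp [natPoly, q]⟩
  have ht : t ∈ natPoly.rangeS := ⟨MvPolynomial.X 1, by simp [natPoly, t]⟩
  refine sum_mem fun m hm => ?_
  rw [Finset.mem_Icc] at hm
  obtain ⟨u, hu⟩ := Int.eq_ofNat_of_zero_le (show 0 ≤ m by omega)
  obtain ⟨v, hv⟩ := Int.eq_ofNat_of_zero_le (show 0 ≤ k + l - m by omega)
  rw [hv, hu, zpow_natCast, zpow_natCast]
  exact mul_mem (pow_mem hq _) (pow_mem ht _)



theorem F₃_symmetric_chains (a b c : ℤ) (ha : 0 ≤ a) (hb : 0 ≤ b) (hc : 0 ≤ c)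
    (hab : b ≤ a + 1) (hac : c ≤ a + 1) (hbc : c ≤ b + 1) :
    F₃ a b c
      = (∑ p ∈ Qtilde a b c,
          symChain (p.1 + max 0 (p.1 + p.2 - b - c))
            (a + 2 * b + 3 * c - 2 * p.1 - p.2)) ∧
    ∃ p : MvPolynomial (Fin 2) ℕ,
      F₃ a b c = algebraMap (MvPolynomial (Fin 2) ℚ) K
        (MvPolynomial.map (Nat.castRingHom ℚ) p) := by
  have main := (F₃_eq_full a b c hc (by omega)).trans (full_eq_Qtilde a b c ha hb hc hab hac hbc)
  refine ⟨main, ?_⟩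
  have hmem : F₃ a b c ∈ natPoly.rangeS := by
    rw [main]
    refine sum_mem fun p hp => symChain_mem _ _ ?_
    simp only [Qtilde, Finset.mem_filter, Finset.mem_product, Finset.mem_Icc] at hp
    omega
  obtain ⟨p, hp⟩ := hmem
  exact ⟨p, hp.symm⟩
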